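/- For every nonnegative integer n, there exist integers x, y, z such that n = p_5(x) + 2·p_5(y) + 3·p_5(z), where p_5(x) = (3x² − x)/2. In other words, the sum p_5 + 2p_5 + 3p_5 is universal over ℤ. -/

import Mathlib

/-- Generalized pentagonal number: `p₅(x) = (3x² − x)/2`. -/
def p5 (x : ℤ) : ℤ := (3 * x ^ 2 - x) / 2

/-!
Since `24 p₅(x) + 1 = (6x - 1)²`, the equation `n = p₅(x) + 2 p₅(y) + 3 p₅(z)` amounts to
`6 (4n + 1) = X² + 2Y² + 3Z²` with `X`, `Y`, `Z` coprime to `6`. The identity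
`6 (s² + 4t² + 4v²) = (s - 2t + 4v)² + 2 (s - 2t - 2v)² + 3 (s + 2t)²` produces such `X`, `Y`, `Z`
from a representation of `4n + 1` as a sum of three squares that are not all divisible by `3`, once
`t` and `v` have been suitably signed and ordered.

That `m ≡ 1 [MOD 4]` is a sum of three squares is proved in the manner of Ankeny: choose a prime
`q ≡ 1 [MOD 4]` with `q ≡ -1 [MOD m]`. By quadratic reciprocity and Legendre's theorem,
`m T² = x² + q y²` is solvable with `T ≠ 0`; as `q` is a sum of two squares, `m T²` is a sum of
three squares, and the Davenport–Cassels descent removes `T`.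
-/

open Finset
open QuadraticMap (polar polar_comm polar_smul_left polar_smul_right weightedSumSquares
  weightedSumSquares_apply)

section Descent

lemma map_smul_add_smul_eq_add_mul_polar {R M : Type*} [CommRing R] [AddCommGroup M] [Module R M]
    (Q : QuadraticForm R M) (a b : R) (x y : M) :
    Q (a • x + b • y) = a ^ 2 * Q x + b ^ 2 * Q y + a * b * polar Q x y := by
  rw [QuadraticMap.map_add Q, QuadraticMap.map_smul, QuadraticMap.map_smul, polar_smul_left,
    polar_smul_right]
  simp only [smul_eq_mul]
  ring

variable {M : Type*} [AddCommGroup M]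

/-- A Euclidean quadratic form: every rational vector `x / T` is at `Q`-distance less than `1` from
an integral one. The condition is scaled by `T` in order to stay within `M`. -/
def IsEuclideanForm (Q : QuadraticForm ℤ M) : Prop :=
  ∀ T : ℤ, T ≠ 0 → ∀ x : M, ∃ X : M, |Q (T • X - x)| < T ^ 2

/-- The Davenport–Cassels lemma: if `X` is an integral vector close to `x / T`, the line through
both meets the quadric `Q = m` in a second rational point, which has a smaller denominator. -/
theorem IsEuclideanForm.exists_apply_eq {Q : QuadraticForm ℤ M} (hQ : IsEuclideanForm Q)
    (hQ' : Q.Anisotropic) {m T : ℤ} (hT : T ≠ 0) {x : M} (hx : Q x = m * T ^ 2) :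
    ∃ X : M, Q X = m := by
  induction hk : T.natAbs using Nat.strong_induction_on generalizing T x with
  | _ k ih =>
  obtain ⟨X, hX⟩ := hQ T hT x
  set a := Q X - m
  set b := 2 * m * T - polar Q x X
  have hdist : Q (T • X - x) = T * (a * T + b) := by
    have := map_smul_add_smul_eq_add_mul_polar Q T (-1) X x
    rw [neg_one_smul ℤ, ← sub_eq_add_neg, polar_comm] at this
    linear_combination this + hx
  by_cases hT' : a * T + b = 0
  · have hxX : T • X = x := sub_eq_zero.1 (hQ' _ (by rw [hdist, hT', mul_zero]))
    refine ⟨X, mul_left_cancel₀ (pow_ne_zero 2 hT) ?_⟩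
    rw [← hxX, QuadraticMap.map_smul, smul_eq_mul] at hx
    linear_combination hx
  · have hlt : |a * T + b| < |T| := by
      rw [hdist, abs_mul, ← sq_abs, sq] at hX
      exact lt_of_mul_lt_mul_left hX (abs_nonneg T)
    refine ih _ (by rw [← hk]; zify; exact hlt) hT' (x := a • x + b • X) ?_ rfl
    rw [map_smul_add_smul_eq_add_mul_polar]
    linear_combination a ^ 2 * hx

end Descent

lemma exists_two_mul_abs_mul_sub_le {T : ℤ} (hT : T ≠ 0) (x : ℤ) :
    ∃ X : ℤ, 2 * |T * X - x| ≤ |T| := by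
  refine ⟨round (x / T : ℚ), ?_⟩
  have hT' : (T : ℚ) ≠ 0 := by exact_mod_cast hT
  have hround : |(T * round (x / T : ℚ) - x : ℚ)| =
      |(T : ℚ)| * |(x / T - round (x / T : ℚ) : ℚ)| := by
    rw [← abs_mul, mul_sub, mul_div_cancel₀ _ hT', abs_sub_comm]
  have : 2 * |(T * round (x / T : ℚ) - x : ℚ)| ≤ |(T : ℚ)| := by
    rw [hround]
    linarith [mul_le_mul_of_nonneg_left (abs_sub_round (x / T : ℚ)) (abs_nonneg (T : ℚ))]
  exact_mod_cast this

section SumOfSquares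

variable {ι : Type*} [Fintype ι]

lemma weightedSumSquares_one_apply {R : Type*} [CommSemiring R] (x : ι → R) :
    weightedSumSquares R (1 : ι → R) x = ∑ i, x i ^ 2 := by
  simp [weightedSumSquares_apply, sq]

lemma anisotropic_weightedSumSquares_one {R : Type*} [CommRing R] [LinearOrder R]
    [IsStrictOrderedRing R] : (weightedSumSquares R (1 : ι → R)).Anisotropic := by
  intro x hx
  rw [weightedSumSquares_one_apply, sum_eq_zero_iff_of_nonneg fun i _ ↦ sq_nonneg (x i)] at hx
  exact funext fun i ↦ pow_eq_zero_iff two_ne_zero |>.1 (hx i (mem_univ i))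

lemma isEuclideanForm_weightedSumSquares_one (hι : Fintype.card ι ≤ 3) :
    IsEuclideanForm (weightedSumSquares ℤ (1 : ι → ℤ)) := by
  intro T hT x
  choose X hX using fun i ↦ exists_two_mul_abs_mul_sub_le hT (x i)
  have hcoord (i : ι) : 4 * (T * X i - x i) ^ 2 ≤ T ^ 2 := by
    rw [← sq_abs (T * X i - x i), ← sq_abs T]
    nlinarith [hX i, abs_nonneg (T * X i - x i)]
  have hsum : 4 * ∑ i, (T * X i - x i) ^ 2 ≤ Fintype.card ι * T ^ 2 := by
    rw [mul_sum, ← nsmul_eq_mul, ← card_univ, ← sum_const]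
    exact sum_le_sum fun i _ ↦ hcoord i
  have : (Fintype.card ι : ℤ) ≤ 3 := by exact_mod_cast hι
  refine ⟨X, ?_⟩
  rw [weightedSumSquares_one_apply, abs_of_nonneg (by positivity)]
  simp only [Pi.sub_apply, Pi.smul_apply, smul_eq_mul]
  nlinarith [sq_pos_of_ne_zero hT]

end SumOfSquares

theorem exists_eq_sq_add_sq_add_sq_of_mul_sq {m T x y z : ℤ} (hT : T ≠ 0)
    (h : m * T ^ 2 = x ^ 2 + y ^ 2 + z ^ 2) : ∃ a b c : ℤ, m = a ^ 2 + b ^ 2 + c ^ 2 := by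
  have hx : weightedSumSquares ℤ (1 : Fin 3 → ℤ) ![x, y, z] = m * T ^ 2 := by
    rw [weightedSumSquares_one_apply, Fin.sum_univ_three, h]
    simp
  obtain ⟨X, hX⟩ := (isEuclideanForm_weightedSumSquares_one (Fintype.card_fin 3).le).exists_apply_eq
    anisotropic_weightedSumSquares_one hT hx
  rw [weightedSumSquares_one_apply, Fin.sum_univ_three] at hX
  exact ⟨X 0, X 1, X 2, hX.symm⟩

section Pigeonhole

variable {ι G : Type*} [Fintype ι] [AddGroup G] [Finite G]

lemma exists_ne_zero_abs_lt_map_eq_zero (φ : (ι → ℤ) →+ G) (B : ι → ℕ)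
    (hB : Nat.card G < ∏ i, B i) : ∃ v : ι → ℤ, v ≠ 0 ∧ (∀ i, |v i| < B i) ∧ φ v = 0 := by
  classical
  have := Fintype.ofFinite G
  let box (u : ∀ i, Fin (B i)) : ι → ℤ := fun i ↦ (u i : ℕ)
  obtain ⟨u, v, huv, hφ⟩ := Fintype.exists_ne_map_eq_of_card_lt (fun u ↦ φ (box u))
    (by simpa [Nat.card_eq_fintype_card] using hB)
  refine ⟨box u - box v, ?_, fun i ↦ Int.abs_sub_lt_of_lt_lt (v i).2 (u i).2, ?_⟩
  · contrapose! huv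
    ext i
    exact Int.natCast_inj.1 (congrFun (sub_eq_zero.1 huv) i)
  · rw [map_sub, hφ, sub_self]

theorem exists_ne_zero_sq_lt_map_eq_zero (φ : (ι → ℤ) →+ G) (N : ι → ℕ)
    (hN : Nat.card G ^ 2 < ∏ i, N i) : ∃ v : ι → ℤ, v ≠ 0 ∧ (∀ i, v i ^ 2 < N i) ∧ φ v = 0 := by
  have hpos (i : ι) : 0 < N i :=
    Nat.pos_of_ne_zero (prod_ne_zero_iff.1 (Nat.zero_lt_of_lt hN).ne' i (mem_univ i))
  have hcard : Nat.card G < ∏ i, ((N i - 1).sqrt + 1) := by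
    refine lt_of_pow_lt_pow_left' 2 (hN.trans_le ?_)
    rw [← prod_pow]
    exact prod_le_prod' fun i _ ↦ Nat.le_of_pred_lt (Nat.lt_succ_sqrt' (N i - 1))
  obtain ⟨v, hv, hlt, hφ⟩ := exists_ne_zero_abs_lt_map_eq_zero φ _ hcard
  refine ⟨v, hv, fun i ↦ ?_, hφ⟩
  have hle : (v i).natAbs ≤ (N i - 1).sqrt :=
    Nat.lt_succ_iff.1 (by zify; exact_mod_cast hlt i)
  have hsq : (v i).natAbs ^ 2 < N i := Nat.lt_of_le_pred (hpos i) (Nat.le_sqrt'.1 hle)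
  rw [← Int.natAbs_sq]
  exact_mod_cast hsq

end Pigeonhole

section Legendre

variable {q m : ℕ} [NeZero q] [NeZero m]

lemma exists_small_mul_dvd_sq_add_mul_sq_sub_mul_sq (hqm : q.Coprime m)
    (hm : IsSquare (m : ZMod q)) (hq : IsSquare (-q : ZMod m)) :
    ∃ t z w : ℤ, (t ≠ 0 ∨ z ≠ 0 ∨ w ≠ 0) ∧ t ^ 2 < q ∧ z ^ 2 < q * m ∧ w ^ 2 ≤ m ∧
      (q * m : ℤ) ∣ z ^ 2 + q * w ^ 2 - m * t ^ 2 := by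
  obtain ⟨r, hr⟩ := hm
  obtain ⟨s, hs⟩ := hq
  let φ : (Fin 3 → ℤ) →+ ZMod q × ZMod m :=
    AddMonoidHom.mk' (fun v ↦ (v 1 - r * v 0, v 1 - s * v 2)) fun u v ↦ by
      ext <;> simp only [Pi.add_apply, Int.cast_add, Prod.mk_add_mk] <;> ring
  have hcard : Nat.card (ZMod q × ZMod m) ^ 2 < ∏ i, ![q, q * m, m + 1] i := by
    rw [Nat.card_prod, Nat.card_zmod, Nat.card_zmod, Fin.prod_univ_three]
    have hpos : 0 < q ^ 2 * m := Nat.mul_pos (pow_pos (NeZero.pos q) 2) (NeZero.pos m)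
    calc (q * m) ^ 2 < (q * m) ^ 2 + q ^ 2 * m := Nat.lt_add_of_pos_right hpos
      _ = q * (q * m) * (m + 1) := by ring
  obtain ⟨v, hv, hlt, hφ⟩ := exists_ne_zero_sq_lt_map_eq_zero φ _ hcard
  obtain ⟨hφq, hφm⟩ : (v 1 - r * v 0 : ZMod q) = 0 ∧ (v 1 - s * v 2 : ZMod m) = 0 :=
    Prod.ext_iff.1 hφ
  refine ⟨v 0, v 1, v 2, ?_, hlt 0, by simpa using hlt 1, Int.lt_add_one_iff.1 (hlt 2), ?_⟩
  · contrapose! hv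
    ext i
    fin_cases i <;> simp [hv]
  · refine (Nat.isCoprime_iff_coprime.2 hqm).mul_dvd ?_ ?_ <;>
      rw [← ZMod.intCast_zmod_eq_zero_iff_dvd] <;> push_cast <;> rw [ZMod.natCast_self]
    · linear_combination (v 1 + r * v 0) * hφq - v 0 ^ 2 * hr
    · linear_combination (v 1 + s * v 2) * hφm - v 2 ^ 2 * hs

/-- An instance of Legendre's theorem on ternary quadratic forms. A small zero of
`z² + q w² - m t²` modulo `q m` is either a zero, or takes the value `q m`; in the latter case, the
norm form `x² + q y²` being multiplicative, `m (t² + q)² = (z² + q w²) (t² + q)` has the required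
shape. -/
theorem exists_mul_sq_eq_sq_add_mul_sq (hqm : q.Coprime m) (hm : IsSquare (m : ZMod q))
    (hq : IsSquare (-q : ZMod m)) :
    ∃ T x y : ℤ, T ≠ 0 ∧ m * T ^ 2 = x ^ 2 + q * y ^ 2 := by
  obtain ⟨t, z, w, hne, ht, hz, hw, k, hk⟩ :=
    exists_small_mul_dvd_sq_add_mul_sq_sub_mul_sq hqm hm hq
  have hqpos : (0 : ℤ) < q := by exact_mod_cast NeZero.pos q
  have hmpos : (0 : ℤ) < m := by exact_mod_cast NeZero.pos m
  have hqmpos : (0 : ℤ) < q * m := mul_pos hqpos hmpos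
  have hklo : -1 < k := by
    refine lt_of_mul_lt_mul_left (a := (q * m : ℤ)) ?_ hqmpos.le
    nlinarith [sq_nonneg z, mul_nonneg hqpos.le (sq_nonneg w), mul_lt_mul_of_pos_left ht hmpos]
  have hkhi : k < 2 := by
    refine lt_of_mul_lt_mul_left (a := (q * m : ℤ)) ?_ hqmpos.le
    nlinarith [mul_nonneg hmpos.le (sq_nonneg t), mul_le_mul_of_nonneg_left hw hqpos.le]
  obtain rfl | rfl : k = 0 ∨ k = 1 := by omega
  · refine ⟨t, z, w, ?_, by linear_combination -hk⟩
    rintro rfl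
    have hzw : z ^ 2 + q * w ^ 2 = 0 := by linear_combination hk
    rw [add_eq_zero_iff_of_nonneg (sq_nonneg z) (by positivity)] at hzw
    simp_all [NeZero.ne q]
  · exact ⟨t ^ 2 + q, z * t - q * w, z + w * t, by positivity,
      by linear_combination -(t ^ 2 + q) * hk⟩

end Legendre

section ThreeSquares

variable {m q : ℕ}

lemma exists_prime_one_mod_four_dvd_add_one (hm : Odd m) :
    ∃ q : ℕ, q.Prime ∧ q % 4 = 1 ∧ m ∣ q + 1 := by
  obtain ⟨k, hk⟩ := hm
  have hcop : Nat.Coprime (2 * m - 1) (4 * m) := by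
    have hsucc : Nat.Coprime (2 * m - 1) (2 * m) := by
      rw [Nat.coprime_comm]
      exact Nat.coprime_self_sub_right (by omega) |>.2 (Nat.coprime_one_right _)
    have htwo : Nat.Coprime (2 * m - 1) 2 := hsucc.coprime_mul_right_right
    rw [show 4 * m = 2 * (2 * m) by ring]
    exact htwo.mul_right hsucc
  obtain ⟨q, -, hqp, hq⟩ := Nat.forall_exists_prime_gt_and_modEq 0 (by omega) hcop
  have hq4 : q ≡ 2 * m - 1 [MOD 4] := hq.of_mul_right _
  have hqm : q + 1 ≡ m * 2 [MOD m] := by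
    convert (hq.of_mul_left _).add_right 1 using 1
    omega
  refine ⟨q, hqp, ?_, (hqm.dvd_iff dvd_rfl).2 (dvd_mul_right m 2)⟩
  unfold Nat.ModEq at hq4
  omega

lemma jacobiSym_eq_one_of_dvd_add_one (hm : m % 4 = 1) (hq : Odd q) (h : m ∣ q + 1) :
    jacobiSym m q = 1 := by
  have hqm : (q : ℤ) ≡ -1 [ZMOD m] :=
    (Int.modEq_iff_dvd.2 (by simpa using Int.natCast_dvd_natCast.2 h)).symm
  rw [jacobiSym.quadratic_reciprocity_one_mod_four hm hq, jacobiSym.mod_left' hqm,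
    jacobiSym.at_neg_one (Nat.odd_iff.2 (by omega)), ZMod.χ₄_nat_one_mod_four hm]

theorem exists_eq_sq_add_sq_add_sq_of_mod_four_eq_one (hm : m % 4 = 1) :
    ∃ a b c : ℤ, m = a ^ 2 + b ^ 2 + c ^ 2 := by
  obtain ⟨q, hqp, hq4, hmq⟩ :=
    exists_prime_one_mod_four_dvd_add_one (m := m) (Nat.odd_iff.2 (by omega))
  have : Fact q.Prime := ⟨hqp⟩
  have : NeZero m := ⟨by omega⟩
  have hcop : q.Coprime m :=
    Nat.Coprime.coprime_dvd_right hmq (Nat.coprime_self_add_right.2 (Nat.coprime_one_right q))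
  have hm_sq : IsSquare (m : ZMod q) := by
    exact_mod_cast ZMod.isSquare_of_jacobiSym_eq_one
      (jacobiSym_eq_one_of_dvd_add_one hm (Nat.odd_iff.2 (by omega)) hmq)
  have hq_sq : IsSquare (-q : ZMod m) := by
    have : ((q + 1 : ℕ) : ZMod m) = 0 := (ZMod.natCast_eq_zero_iff _ _).2 hmq
    exact ⟨1, by push_cast at this; linear_combination -this⟩
  obtain ⟨T, x, y, hT, h⟩ := exists_mul_sq_eq_sq_add_mul_sq hcop hm_sq hq_sq
  obtain ⟨a, b, hab⟩ := Nat.Prime.sq_add_sq (p := q) (by omega)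
  refine exists_eq_sq_add_sq_add_sq_of_mul_sq hT (x := x) (y := a * y) (z := b * y) ?_
  rw [h, ← hab]
  push_cast
  ring

end ThreeSquares

lemma exists_nine_mul_eq_sq_add_sq_add_sq {l a b c : ℤ} (h : l = a ^ 2 + b ^ 2 + c ^ 2)
    (hprim : ¬(3 ∣ a ∧ 3 ∣ b ∧ 3 ∣ c)) :
    ∃ x y z : ℤ, 9 * l = x ^ 2 + y ^ 2 + z ^ 2 ∧ ¬(3 ∣ x ∧ 3 ∣ y ∧ 3 ∣ z) := by
  -- Twice the matrix of ones minus three times the identity is `3` times an orthogonal matrix.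
  have reflect (a b c : ℤ) (h : l = a ^ 2 + b ^ 2 + c ^ 2) (hsum : ¬3 ∣ a + b + c) :
      ∃ x y z : ℤ, 9 * l = x ^ 2 + y ^ 2 + z ^ 2 ∧ ¬(3 ∣ x ∧ 3 ∣ y ∧ 3 ∣ z) :=
    ⟨-a + 2 * b + 2 * c, 2 * a - b + 2 * c, 2 * a + 2 * b - c, by rw [h]; ring, by omega⟩
  -- Changing the sign of a coordinate prime to `3` changes the sum modulo `3`.
  by_cases hsum : 3 ∣ a + b + c
  · by_cases ha : 3 ∣ a
    · by_cases hb : 3 ∣ b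
      · exact reflect a b (-c) (by rw [h]; ring) (by omega)
      · exact reflect a (-b) c (by rw [h]; ring) (by omega)
    · exact reflect (-a) b c (by rw [h]; ring) (by omega)
  · exact reflect a b c h hsum

theorem exists_eq_sq_add_sq_add_sq_not_three_dvd {m a b c : ℤ} (hm : m ≠ 0)
    (h : m = a ^ 2 + b ^ 2 + c ^ 2) :
    ∃ x y z : ℤ, m = x ^ 2 + y ^ 2 + z ^ 2 ∧ ¬(3 ∣ x ∧ 3 ∣ y ∧ 3 ∣ z) := by
  induction hk : m.natAbs using Nat.strong_induction_on generalizing m a b c with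
  | _ k ih =>
  by_cases hprim : 3 ∣ a ∧ 3 ∣ b ∧ 3 ∣ c
  · obtain ⟨⟨a, rfl⟩, ⟨b, rfl⟩, ⟨c, rfl⟩⟩ := hprim
    have hm9 : m = 9 * (a ^ 2 + b ^ 2 + c ^ 2) := by rw [h]; ring
    obtain ⟨x, y, z, hxyz, hprim⟩ :=
      ih (a ^ 2 + b ^ 2 + c ^ 2).natAbs (by omega) (by omega) rfl rfl
    rw [hm9]
    exact exists_nine_mul_eq_sq_add_sq_add_sq hxyz hprim
  · exact ⟨a, b, c, h, hprim⟩

lemma exists_eq_sq_add_four_mul_sq_add_four_mul_sq {m a b c : ℤ} (hm : m % 4 = 1)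
    (h : m = a ^ 2 + b ^ 2 + c ^ 2) (hprim : ¬(3 ∣ a ∧ 3 ∣ b ∧ 3 ∣ c)) :
    ∃ s t v : ℤ, m = s ^ 2 + 4 * t ^ 2 + 4 * v ^ 2 ∧ ¬(3 ∣ s ∧ 3 ∣ t ∧ 3 ∣ v) := by
  have sq_mod_four (x : ℤ) : Even x ∧ x ^ 2 % 4 = 0 ∨ x ^ 2 % 4 = 1 := by
    rcases Int.even_or_odd x with ⟨y, rfl⟩ | hx
    · exact .inl ⟨⟨y, rfl⟩, by ring_nf; omega⟩
    · exact .inr (Int.sq_mod_four_eq_one_of_odd hx)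
  have two_even : Even b ∧ Even c ∨ Even a ∧ Even c ∨ Even a ∧ Even b := by
    have := sq_mod_four a
    have := sq_mod_four b
    have := sq_mod_four c
    grind
  rcases two_even with ⟨⟨t, rfl⟩, ⟨v, rfl⟩⟩ | ⟨⟨t, rfl⟩, ⟨v, rfl⟩⟩ | ⟨⟨t, rfl⟩, ⟨v, rfl⟩⟩
  · exact ⟨a, t, v, by rw [h]; ring, by omega⟩
  · exact ⟨b, t, v, by rw [h]; ring, by omega⟩
  · exact ⟨c, t, v, by rw [h]; ring, by omega⟩

lemma exists_sq_add_sq_eq_not_three_dvd {s t v : ℤ} (hprim : ¬(3 ∣ s ∧ 3 ∣ t ∧ 3 ∣ v)) :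
    ∃ t' v' : ℤ, t' ^ 2 + v' ^ 2 = t ^ 2 + v ^ 2 ∧ ¬3 ∣ s - t' ∧ ¬3 ∣ s + t' + v' := by
  have mod_three : (¬3 ∣ s - t ∧ ¬3 ∣ s + t + v) ∨ (¬3 ∣ s + t ∧ ¬3 ∣ s - t + v) ∨
      (¬3 ∣ s - t ∧ ¬3 ∣ s + t - v) ∨ (¬3 ∣ s - v ∧ ¬3 ∣ s + v + t) ∨
      (¬3 ∣ s - v ∧ ¬3 ∣ s + v - t) := by
    omega
  rcases mod_three with h | h | h | h | h
  · exact ⟨t, v, rfl, h⟩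
  · exact ⟨-t, v, by ring, by omega, by omega⟩
  · exact ⟨t, -v, by ring, by omega, by omega⟩
  · exact ⟨v, t, by ring, h⟩
  · exact ⟨v, -t, by ring, by omega, by omega⟩

lemma twentyFour_mul_p5_add_one (x : ℤ) : 24 * p5 x + 1 = (6 * x - 1) ^ 2 := by
  have heven : 2 ∣ 3 * x ^ 2 - x := by
    rcases Int.even_or_odd' x with ⟨y, rfl | rfl⟩ <;> ring_nf <;> omega
  have htwo : 2 * p5 x = 3 * x ^ 2 - x := Int.mul_ediv_cancel' heven
  linear_combination 12 * htwo

lemma exists_twentyFour_mul_p5_add_one_eq_sq {a : ℤ} (h2 : Odd a) (h3 : ¬3 ∣ a) :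
    ∃ x : ℤ, 24 * p5 x + 1 = a ^ 2 := by
  simp only [twentyFour_mul_p5_add_one]
  obtain ⟨x, hx | hx⟩ : ∃ x, a = 6 * x - 1 ∨ a = -(6 * x - 1) := by
    obtain ha | ha : a % 6 = 5 ∨ a % 6 = 1 := by grind
    · exact ⟨a / 6 + 1, .inl (by omega)⟩
    · exact ⟨-(a / 6), .inr (by omega)⟩
  · exact ⟨x, by rw [hx]⟩
  · exact ⟨x, by rw [hx, neg_sq]⟩

theorem exists_eq_p5_add_two_mul_p5_add_three_mul_p5 {n s t v : ℤ}
    (h : 4 * n + 1 = s ^ 2 + 4 * t ^ 2 + 4 * v ^ 2) (hst : ¬3 ∣ s - t) (hstv : ¬3 ∣ s + t + v) :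
    ∃ x y z : ℤ, n = p5 x + 2 * p5 y + 3 * p5 z := by
  have hs : Odd s :=
    (Int.odd_pow' two_ne_zero).1 ⟨2 * n - 2 * t ^ 2 - 2 * v ^ 2, by linear_combination -h⟩
  obtain ⟨x, hx⟩ := exists_twentyFour_mul_p5_add_one_eq_sq (a := s - 2 * t + 4 * v)
    (by grind) (by omega)
  obtain ⟨y, hy⟩ := exists_twentyFour_mul_p5_add_one_eq_sq (a := s - 2 * t - 2 * v)
    (by grind) (by omega)
  obtain ⟨z, hz⟩ := exists_twentyFour_mul_p5_add_one_eq_sq (a := s + 2 * t)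
    (by grind) (by omega)
  refine ⟨x, y, z, mul_left_cancel₀ (by norm_num : (24 : ℤ) ≠ 0) ?_⟩
  linear_combination 6 * h - hx - 2 * hy - 3 * hz

theorem p5_add_2p5_add_3p5_universal (n : ℕ) :
    ∃ x y z : ℤ, (n : ℤ) = p5 x + 2 * p5 y + 3 * p5 z := by
  obtain ⟨_, _, _, hsq⟩ := exists_eq_sq_add_sq_add_sq_of_mod_four_eq_one (m := 4 * n + 1) (by omega)
  obtain ⟨_, _, _, hsq, hprim⟩ := exists_eq_sq_add_sq_add_sq_not_three_dvd (by omega) hsq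
  obtain ⟨s, t, v, hstv, hprim⟩ :=
    exists_eq_sq_add_four_mul_sq_add_four_mul_sq (by omega) hsq hprim
  obtain ⟨t', v', htv, hst', hstv'⟩ := exists_sq_add_sq_eq_not_three_dvd hprim
  push_cast at hstv
  exact exists_eq_p5_add_two_mul_p5_add_three_mul_p5 (by linear_combination hstv - 4 * htv)
    hst' hstv'
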